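/- arXiv:2601.03208 — 2 statements merged into one kernel-verified Lean document; each statement's English description precedes it below -/
import Mathlib

section
/- For every monomial ideal I of R = K[x_1,…,x_n], the signature operation is idempotent: sgn(sgn(I)) = sgn(I). -/
open MvPolynomial

/-- The monomial ideal of `R = K[x_1,…,x_n]` generated by the monomials `x^{v j}`,
`j = 1, …, q`, with exponent vectors `v j ∈ ℕ^n`. -/
noncomputable def monIdeal (K : Type) [Field K] {n q : ℕ} (v : Fin q → Fin n →₀ ℕ) :
    Ideal (MvPolynomial (Fin n) K) :=
  Ideal.span (Set.range fun j => monomial (v j) (1 : K))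

/-- The exponent vectors `v j` are pairwise non-comparable in the componentwise order,
i.e. the corresponding monomials form an anti-chain under divisibility.  Equivalently,
`{x^{v j}}` is the (unique) minimal monomial generating set `G(I)` of the monomial ideal
`I` it generates. -/
def AntichainFam {n q : ℕ} (v : Fin q → Fin n →₀ ℕ) : Prop :=
  ∀ j k : Fin q, v j ≤ v k → j = k

/-- The signature of the family `v` of exponent vectors (the columns of the incidence
matrix `A`): for each row `i`, the `(i,j)` entry of the signature matrix is the position
of `A i j = v j i` in the ascending list of the distinct entries of the `i`-th row of `A`,
i.e. the number of distinct values in row `i` that are strictly smaller than `v j i`.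
The columns of the resulting matrix are the exponent vectors of the generators of the
signature ideal `sgn(I) = monIdeal K (sgnExp v)`. -/
noncomputable def sgnExp {n q : ℕ} (v : Fin q → Fin n →₀ ℕ) : Fin q → Fin n →₀ ℕ :=
  fun j => Finsupp.equivFunOnFinite.symm fun i =>
    ((Finset.univ.image fun k : Fin q => v k i).filter fun m => m < v j i).card

theorem aux_mem (K : Type) [Field K] {n q : ℕ} (u : Fin q → Fin n →₀ ℕ) (a : Fin n →₀ ℕ)
    (h : monomial a (1 : K) ∈ monIdeal K u) : ∃ k, u k ≤ a := by
  have e : (Set.range fun j => monomial (u j) (1 : K)) =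
      (fun s => monomial s (1 : K)) '' Set.range u := by
    rw [← Set.range_comp]; rfl
  rw [monIdeal, e, mem_ideal_span_monomial_image] at h
  obtain ⟨s, ⟨k, rfl⟩, hk⟩ := h a (by simp [mem_support_iff])
  exact ⟨k, hk⟩

theorem aux_range (K : Type) [Field K] {n q q' : ℕ} (u : Fin q → Fin n →₀ ℕ)
    (w : Fin q' → Fin n →₀ ℕ) (hw : AntichainFam w)
    (h : monIdeal K w = monIdeal K u) : Set.range w ⊆ Set.range u := by
  rintro _ ⟨j, rfl⟩
  obtain ⟨k, hk⟩ := aux_mem K u (w j) (h ▸ Ideal.subset_span ⟨j, rfl⟩)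
  obtain ⟨l, hl⟩ := aux_mem K w (u k) (h.symm ▸ Ideal.subset_span ⟨k, rfl⟩)
  have := hw _ _ (hl.trans hk)
  subst this
  exact ⟨k, le_antisymm hk hl⟩

theorem aux_lt (S : Finset ℕ) (a b : ℕ) (ha : a ∈ S) :
    (S.filter fun m => m < a).card < (S.filter fun m => m < b).card ↔ a < b := by
  constructor
  · intro h
    by_contra hab
    refine absurd h (not_lt.2 (Finset.card_le_card ?_))
    intro x; simp only [Finset.mem_filter]
    rintro ⟨h1, h2⟩; exact ⟨h1, by omega⟩
  · intro h
    refine Finset.card_lt_card ?_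
    rw [Finset.ssubset_iff]
    refine ⟨a, by simp, ?_⟩
    intro x; simp only [Finset.mem_insert, Finset.mem_filter]
    rintro (rfl | ⟨h1, h2⟩)
    · exact ⟨ha, h⟩
    · exact ⟨h1, by omega⟩

theorem aux_sgn_apply {n q : ℕ} (v : Fin q → Fin n →₀ ℕ) (j : Fin q) (i : Fin n) :
    sgnExp v j i =
      ((Finset.univ.image fun k : Fin q => v k i).filter fun m => m < v j i).card := rfl

theorem aux_sgn_lt {n q : ℕ} (v : Fin q → Fin n →₀ ℕ) (j k : Fin q) (i : Fin n) :
    sgnExp v j i < sgnExp v k i ↔ v j i < v k i := by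
  rw [aux_sgn_apply, aux_sgn_apply]
  exact aux_lt _ _ _ (by simp)

theorem aux_anti {n q : ℕ} (v : Fin q → Fin n →₀ ℕ) (hv : AntichainFam v) :
    AntichainFam (sgnExp v) := by
  intro j k h
  refine hv j k fun i => ?_
  have := h i
  rw [← not_lt, aux_sgn_lt] at this
  exact not_lt.1 this

theorem aux_idem {n q : ℕ} (v : Fin q → Fin n →₀ ℕ) : sgnExp (sgnExp v) = sgnExp v := by
  funext j
  ext i
  rw [aux_sgn_apply (sgnExp v), aux_sgn_apply v j]
  symm
  set S := Finset.univ.image fun k : Fin q => v k i with hS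
  refine Finset.card_bij (fun m _ => (S.filter fun x => x < m).card) ?_ ?_ ?_
  · intro a ha
    simp only [hS, Finset.mem_filter, Finset.mem_image, Finset.mem_univ, true_and] at ha
    obtain ⟨⟨k, rfl⟩, hk⟩ := ha
    rw [Finset.mem_filter]
    exact ⟨Finset.mem_image.2 ⟨k, Finset.mem_univ _, rfl⟩, (aux_sgn_lt v k j i).2 hk⟩
  · intro a ha b hb hab
    have h1 := aux_lt S a b (Finset.mem_filter.1 ha).1
    have h2 := aux_lt S b a (Finset.mem_filter.1 hb).1
    omega
  · intro b hb
    rw [Finset.mem_filter, Finset.mem_image] at hb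
    obtain ⟨⟨k, -, rfl⟩, hk⟩ := hb
    refine ⟨v k i, ?_, rfl⟩
    rw [Finset.mem_filter]
    exact ⟨Finset.mem_image.2 ⟨k, Finset.mem_univ _, rfl⟩, (aux_sgn_lt v k j i).1 hk⟩

theorem aux_sgn_range {n q q' : ℕ} (u : Fin q → Fin n →₀ ℕ) (w : Fin q' → Fin n →₀ ℕ)
    (h : Set.range w = Set.range u) : Set.range (sgnExp w) ⊆ Set.range (sgnExp u) := by
  rintro _ ⟨j, rfl⟩
  obtain ⟨k, hk⟩ : w j ∈ Set.range u := h ▸ ⟨j, rfl⟩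
  refine ⟨k, ?_⟩
  ext i
  rw [aux_sgn_apply, aux_sgn_apply, hk]
  congr 2
  ext m
  simp only [Finset.mem_image, Finset.mem_univ, true_and]
  constructor
  · rintro ⟨l, rfl⟩
    obtain ⟨l', hl⟩ : u l ∈ Set.range w := h ▸ ⟨l, rfl⟩
    exact ⟨l', by rw [hl]⟩
  · rintro ⟨l, rfl⟩
    obtain ⟨l', hl⟩ : w l ∈ Set.range u := h ▸ ⟨l, rfl⟩
    exact ⟨l', by rw [hl]⟩

theorem aux_ideal (K : Type) [Field K] {n q q' : ℕ} (u : Fin q → Fin n →₀ ℕ)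
    (w : Fin q' → Fin n →₀ ℕ) (h : Set.range w = Set.range u) :
    monIdeal K w = monIdeal K u := by
  have e : ∀ {p : ℕ} (u : Fin p → Fin n →₀ ℕ), (Set.range fun j => monomial (u j) (1 : K)) =
      (fun s => monomial s (1 : K)) '' Set.range u := by
    intro p u
    rw [← Set.range_comp]; rfl
  rw [monIdeal, monIdeal, e, e, h]

/-- **Signature invariants of monomial ideals** (Lemma: idempotence of the signature).
For every monomial ideal `I` of `R = K[x_1,…,x_n]`, with minimal monomial generating
set `G(I) = {x^{v_1},…,x^{v_q}}`, one has `sgn(sgn(I)) = sgn(I)`: if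
`G(sgn(I)) = {x^{w_1},…,x^{w_{q'}}}` is the minimal monomial generating set of the
signature ideal `sgn(I)`, then the signature ideal of `sgn(I)` is `sgn(I)` itself. -/
theorem sgn_sgn_eq_sgn (K : Type) [Field K] (n q : ℕ)
    (v : Fin q → Fin n →₀ ℕ) (hv : AntichainFam v)
    (q' : ℕ) (w : Fin q' → Fin n →₀ ℕ) (hw : AntichainFam w)
    (hgen : monIdeal K w = monIdeal K (sgnExp v)) :
    monIdeal K (sgnExp w) = monIdeal K (sgnExp v) := by
  have h : Set.range w = Set.range (sgnExp v) :=
    Set.Subset.antisymm (aux_range K _ _ hw hgen) (aux_range K _ _ (aux_anti v hv) hgen.symm)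
  have h2 := Set.Subset.antisymm (aux_sgn_range _ _ h) (aux_sgn_range _ _ h.symm)
  rw [aux_idem] at h2
  exact aux_ideal K _ _ h2
end

section
/- Let I ⊆ R = K[x_1,…,x_n] be a monomial ideal of height 1 that is not a principal ideal, and let f be the greatest common divisor of the monomials in G(I). Then there is a monomial ideal L of R with ht(L) ≥ 2 such that I = f·L, reg(R/I) = reg(R/L) + deg(f), and sgn(I) = sgn(L). -/
open MvPolynomial

/-- The height (codimension) of an ideal: the infimum of the heights of the prime ideals
containing it, where the height of a prime is the supremum of the lengths of chains of
primes descending from it. -/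
noncomputable def heightOf {R : Type*} [CommRing R] (I : Ideal R) : ℕ∞ :=
  ⨅ p ∈ { p : PrimeSpectrum R | I ≤ p.asIdeal }, Order.height p

/-- Basis (index) type of the `k`-th free module `F_k = ⊕_j R(-j)^{b k j}` of a graded
free resolution: a basis element is a pair `(j, t)` where `j` is its degree shift. -/
def resBas (b : ℕ → ℕ → ℕ) (k : ℕ) : Type := Σ j : ℕ, Fin (b k j)

/-- The `R`-linear map `(α →₀ R) → (β →₀ R)` determined by the matrix whose row at the
basis element `e : α` is `D e`. -/
noncomputable def resMap {R : Type*} [CommRing R] {α β : Type*}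
    (D : α → (β →₀ R)) : (α →₀ R) →ₗ[R] (β →₀ R) :=
  Finsupp.linearCombination R D

/-- A minimal graded free resolution `0 → F_g → ⋯ → F_1 → F_0 = R → R/I → 0` of `R/I`
over the standard graded polynomial ring `R = K[x_1,…,x_n]`, where
`F_k = ⊕_j R(-j)^{b k j}`.  The differentials are graded of degree `0`: the matrix entry
from a basis element with shift `j` to one with shift `j'` is homogeneous of degree
`j - j'`; minimality holds since all (nonzero) entries have `j' < j`, hence positive
degree, i.e. lie in the graded maximal ideal. -/
structure MinFreeRes (K : Type) [Field K] (n : ℕ)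
    (I : Ideal (MvPolynomial (Fin n) K)) where
  /-- the length `g` of the resolution -/
  len : ℕ
  /-- the graded Betti numbers: `F_k = ⊕_j R(-j)^{b k j}` -/
  b : ℕ → ℕ → ℕ
  /-- `F_0 = R` (one copy, no shift) -/
  hb0 : ∀ j, b 0 j = if j = 0 then 1 else 0
  /-- the resolution stops at homological degree `len` -/
  htop : ∀ k, len < k → ∀ j, b k j = 0
  /-- there are only finitely many nonzero Betti numbers -/
  hfin : (Function.support fun kj : ℕ × ℕ => b kj.1 kj.2).Finite
  /-- the matrices of the differentials `d_{k+1} : F_{k+1} → F_k` -/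
  D : ∀ k : ℕ, resBas b (k + 1) → (resBas b k →₀ MvPolynomial (Fin n) K)
  /-- gradedness and minimality of the differentials -/
  hhom : ∀ k e e', D k e e' = 0 ∨
    (e'.1 < e.1 ∧ (D k e e').IsHomogeneous (e.1 - e'.1))
  /-- exactness at `F_k` for `k ≥ 1`; taking `k = len` this also forces injectivity of
  the last differential, since `F_k = 0` for `k > len` -/
  hexact : ∀ k, LinearMap.range (resMap (D (k + 1))) = LinearMap.ker (resMap (D k))
  /-- exactness at `F_0`, the augmentation `F_0 = R → R/I` being the quotient map -/
  hexact0 : LinearMap.range (resMap (D 0)) =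
    LinearMap.ker (Finsupp.linearCombination (MvPolynomial (Fin n) K)
      (fun _ : resBas b 0 => (1 : MvPolynomial (Fin n) K ⧸ I)))

/-- The Castelnuovo–Mumford regularity of `R/I`, computed from a minimal graded free
resolution: `reg(R/I) = max { j - k : b k j ≠ 0 }`. -/
noncomputable def MinFreeRes.reg {K : Type} [Field K] {n : ℕ}
    {I : Ideal (MvPolynomial (Fin n) K)} (F : MinFreeRes K n I) : ℤ :=
  sSup { d : ℤ | ∃ k j : ℕ, F.b k j ≠ 0 ∧ d = (j : ℤ) - (k : ℤ) }

section Aux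

variable {K : Type} [Field K] {n : ℕ}

/-- all degrees occurring in `x` lie in `S` -/
def GrS {β : Type} (deg : β → ℕ) (S : Set ℕ) (x : β →₀ MvPolynomial (Fin n) K) : Prop :=
  ∀ c m, coeff m (x c) ≠ 0 → m.degree + deg c ∈ S

lemma GrS_map {β γ : Type} (dβ : β → ℕ) (dγ : γ → ℕ)
    (B : β → (γ →₀ MvPolynomial (Fin n) K)) (hB : ∀ b, GrS dγ {dβ b} (B b))
    (S : Set ℕ) (x : β →₀ MvPolynomial (Fin n) K) (hx : GrS dβ S x) :
    GrS dγ S (Finsupp.linearCombination _ B x) := by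
  intro c m hm
  rw [Finsupp.linearCombination_apply, Finsupp.sum, Finsupp.finsetSum_apply, coeff_sum] at hm
  obtain ⟨b, -, hb⟩ := Finset.exists_ne_zero_of_sum_ne_zero hm
  rw [Finsupp.smul_apply, smul_eq_mul, coeff_mul] at hb
  obtain ⟨⟨p, r⟩, hp, hpr⟩ := Finset.exists_ne_zero_of_sum_ne_zero hb
  have h1 := hx b p (left_ne_zero_of_mul hpr)
  have h2 := hB b c r (right_ne_zero_of_mul hpr)
  rw [Finset.HasAntidiagonal.mem_antidiagonal] at hp
  simp only [Set.mem_singleton_iff] at h2 hp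
  rw [← hp, map_add, add_assoc, h2]
  exact h1

lemma exists_comp {β : Type} (deg : β → ℕ) (j : ℕ) (x : β →₀ MvPolynomial (Fin n) K) :
    ∃ y : β →₀ MvPolynomial (Fin n) K, GrS deg {j} y ∧ GrS deg {j}ᶜ (x - y) := by
  classical
  let f : β → MvPolynomial (Fin n) K := fun c =>
    if deg c ≤ j then homogeneousComponent (j - deg c) (x c) else 0
  have hf : ∀ c m, coeff m (f c) = if m.degree + deg c = j then coeff m (x c) else 0 := by
    intro c m
    simp only [f]
    split_ifs with h1 h2 h2
    · rw [coeff_homogeneousComponent, if_pos (by omega)]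
    · rw [coeff_homogeneousComponent, if_neg (by omega)]
    · omega
    · simp
  have hs : ∀ c, f c ≠ 0 → c ∈ x.support := by
    intro c hc
    rw [Finsupp.mem_support_iff]
    intro h
    apply hc
    simp [f, h]
  refine ⟨Finsupp.onFinset x.support f hs, ?_, ?_⟩
  · intro c m hm
    rw [Finsupp.onFinset_apply, hf] at hm
    by_contra h
    exact hm (if_neg h)
  · intro c m hm h
    rw [Finsupp.sub_apply, coeff_sub, Finsupp.onFinset_apply, hf, if_pos (Set.mem_singleton_iff.1 h)] at hm
    exact hm (sub_self _)

lemma graded_lift {β γ : Type} (dβ : β → ℕ) (dγ : γ → ℕ)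
    (B : β → (γ →₀ MvPolynomial (Fin n) K)) (hB : ∀ b, GrS dγ {dβ b} (B b))
    (j : ℕ) (y : γ →₀ MvPolynomial (Fin n) K) (hy : GrS dγ {j} y)
    (hr : y ∈ LinearMap.range (Finsupp.linearCombination (MvPolynomial (Fin n) K) B)) :
    ∃ x, GrS dβ {j} x ∧ Finsupp.linearCombination (MvPolynomial (Fin n) K) B x = y := by
  obtain ⟨x, rfl⟩ := hr
  obtain ⟨z, hz, hz'⟩ := exists_comp dβ j x
  refine ⟨z, hz, ?_⟩
  have h1 := GrS_map dβ dγ B hB _ _ hz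
  have h2 := GrS_map dβ dγ B hB _ _ hz'
  rw [map_sub] at h2
  ext c m
  by_contra hne
  have h3 := h2 c m (by
    rw [Finsupp.sub_apply, coeff_sub]
    exact sub_ne_zero.2 (Ne.symm hne))
  by_cases h0 : coeff m (Finsupp.linearCombination (MvPolynomial (Fin n) K) B z c) = 0
  · exact h3 (hy c m (by rw [h0] at hne; exact Ne.symm hne))
  · exact h3 (h1 c m h0)

/-- every lift exists for maps from free modules -/
lemma free_lift {R : Type} [CommRing R] {α : Type} {N M : Type} [AddCommGroup N] [Module R N]
    [AddCommGroup M] [Module R M] (p : (α →₀ R) →ₗ[R] M) (q : N →ₗ[R] M)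
    (h : ∀ x, p x ∈ LinearMap.range q) : ∃ φ : (α →₀ R) →ₗ[R] N, ∀ x, q (φ x) = p x := by
  choose t ht using fun e : α => h (Finsupp.single e 1)
  refine ⟨Finsupp.linearCombination R t, fun x => ?_⟩
  have : q ∘ₗ Finsupp.linearCombination R t = p := by
    ext e
    simp [ht]
  exact LinearMap.congr_fun this x

lemma graded_free_lift {α β γ : Type} (dα : α → ℕ) (dβ : β → ℕ) (dγ : γ → ℕ)
    (p : (α →₀ MvPolynomial (Fin n) K) →ₗ[MvPolynomial (Fin n) K]
      (γ →₀ MvPolynomial (Fin n) K))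
    (hp : ∀ e, GrS dγ {dα e} (p (Finsupp.single e 1)))
    (B : β → (γ →₀ MvPolynomial (Fin n) K)) (hB : ∀ b, GrS dγ {dβ b} (B b))
    (h : ∀ x, p x ∈ LinearMap.range (Finsupp.linearCombination (MvPolynomial (Fin n) K) B)) :
    ∃ φ : α → (β →₀ MvPolynomial (Fin n) K), (∀ e, GrS dβ {dα e} (φ e)) ∧
      ∀ x, Finsupp.linearCombination (MvPolynomial (Fin n) K) B
        (Finsupp.linearCombination (MvPolynomial (Fin n) K) φ x) = p x := by
  choose t ht ht' using fun e : α => graded_lift dβ dγ B hB _ _ (hp e) (h (Finsupp.single e 1))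
  refine ⟨t, ht, fun x => ?_⟩
  have : Finsupp.linearCombination (MvPolynomial (Fin n) K) B ∘ₗ
      Finsupp.linearCombination (MvPolynomial (Fin n) K) t = p := by
    refine Finsupp.lhom_ext' fun e => LinearMap.ext_ring ?_
    simpa using ht' e
  exact LinearMap.congr_fun this x

/-- vectors with entries without constant term -/
def InM {α : Type} (x : α →₀ MvPolynomial (Fin n) K) : Prop := ∀ e, constantCoeff (x e) = 0

lemma InM_map {α β : Type} (s : (α →₀ MvPolynomial (Fin n) K) →ₗ[MvPolynomial (Fin n) K]
      (β →₀ MvPolynomial (Fin n) K)) (x : α →₀ MvPolynomial (Fin n) K) (hx : InM x) :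
    InM (s x) := by
  intro e
  conv_lhs => rw [← Finsupp.sum_single x]
  rw [Finsupp.sum, map_sum, Finsupp.finsetSum_apply, map_sum]
  refine Finset.sum_eq_zero fun a _ => ?_
  have : Finsupp.single a (x a) = x a • Finsupp.single a (1 : MvPolynomial (Fin n) K) := by simp
  rw [this, map_smul, Finsupp.smul_apply, smul_eq_mul, map_mul, hx a, zero_mul]

lemma InM_lc {α β : Type} (B : α → (β →₀ MvPolynomial (Fin n) K)) (hB : ∀ a, InM (B a))
    (x : α →₀ MvPolynomial (Fin n) K) :
    InM (Finsupp.linearCombination (MvPolynomial (Fin n) K) B x) := by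
  intro e
  rw [Finsupp.linearCombination_apply, Finsupp.sum, Finsupp.finsetSum_apply, map_sum]
  refine Finset.sum_eq_zero fun a _ => ?_
  rw [Finsupp.smul_apply, smul_eq_mul, map_mul, hB a, mul_zero]

/-- graded minimal resolutions of an ideal, indexed from its generators -/
structure GRes (K : Type) [Field K] (n : ℕ) where
  α : ℕ → Type
  deg : ∀ k, α k → ℕ
  A : ∀ k, α (k + 1) → (α k →₀ MvPolynomial (Fin n) K)
  a : α 0 → (Unit →₀ MvPolynomial (Fin n) K)
  Z : ∀ k, Submodule (MvPolynomial (Fin n) K) (α k →₀ MvPolynomial (Fin n) K)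
  ha : ∀ e, GrS (fun _ => 0) {deg 0 e} (a e)
  hA : ∀ k e, GrS (deg k) {deg (k + 1) e} (A k e)
  hm : ∀ k e, InM (A k e)
  hZ0 : Z 0 = LinearMap.ker (Finsupp.linearCombination (MvPolynomial (Fin n) K) a)
  hZs : ∀ k, Z (k + 1) = LinearMap.ker (Finsupp.linearCombination (MvPolynomial (Fin n) K) (A k))
  hex : ∀ k, LinearMap.range (Finsupp.linearCombination (MvPolynomial (Fin n) K) (A k)) = Z k

lemma GRes.step (F G : GRes K n)
    (h : LinearMap.range (Finsupp.linearCombination (MvPolynomial (Fin n) K) F.a) =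
      LinearMap.range (Finsupp.linearCombination (MvPolynomial (Fin n) K) G.a)) (k : ℕ) :
    ∃ (φ : F.α k → (G.α k →₀ MvPolynomial (Fin n) K))
      (ψ : (G.α k →₀ MvPolynomial (Fin n) K) →ₗ[MvPolynomial (Fin n) K]
        (F.α k →₀ MvPolynomial (Fin n) K))
      (θ : (F.α k →₀ MvPolynomial (Fin n) K) →ₗ[MvPolynomial (Fin n) K]
        (F.α k →₀ MvPolynomial (Fin n) K)),
      (∀ e, GrS (G.deg k) {F.deg k e} (φ e)) ∧
      (∀ x ∈ F.Z k, Finsupp.linearCombination (MvPolynomial (Fin n) K) φ x ∈ G.Z k) ∧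
      (∀ x ∈ G.Z k, ψ x ∈ F.Z k) ∧
      (∀ x, InM (θ x)) ∧ (∀ x ∈ F.Z k, θ x = 0) ∧
      ∀ x, ψ (Finsupp.linearCombination (MvPolynomial (Fin n) K) φ x) - x - θ x ∈ F.Z k := by
  induction k with
  | zero =>
    obtain ⟨φ, hφ, hφ'⟩ := graded_free_lift (F.deg 0) (G.deg 0) (fun _ : Unit => 0)
      (Finsupp.linearCombination (MvPolynomial (Fin n) K) F.a) (by simpa using F.ha) G.a G.ha
      (fun x => by rw [← h]; exact ⟨x, rfl⟩)
    obtain ⟨ψ, hψ⟩ := free_lift (Finsupp.linearCombination (MvPolynomial (Fin n) K) G.a)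
      (Finsupp.linearCombination (MvPolynomial (Fin n) K) F.a)
      (fun x => by rw [h]; exact ⟨x, rfl⟩)
    refine ⟨φ, ψ, 0, hφ, ?_, ?_, ?_, ?_, ?_⟩
    · intro x hx
      rw [F.hZ0, LinearMap.mem_ker] at hx
      rw [G.hZ0, LinearMap.mem_ker, hφ', hx]
    · intro x hx
      rw [G.hZ0, LinearMap.mem_ker] at hx
      rw [F.hZ0, LinearMap.mem_ker, hψ, hx]
    · intro x e; simp
    · intro x _; rfl
    · intro x
      rw [F.hZ0, LinearMap.mem_ker]
      simp [hψ, hφ']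
  | succ k ih =>
    obtain ⟨φ, ψ, θ, h1, h2, h3, h4, h5, h6⟩ := ih
    obtain ⟨φ', hφ, hφ'⟩ := graded_free_lift (F.deg (k+1)) (G.deg (k+1)) (G.deg k)
      (Finsupp.linearCombination (MvPolynomial (Fin n) K) φ ∘ₗ
        Finsupp.linearCombination (MvPolynomial (Fin n) K) (F.A k))
      (by
        intro e
        rw [LinearMap.comp_apply, Finsupp.linearCombination_single, one_smul]
        exact GrS_map _ _ _ h1 _ _ (F.hA k e))
      (G.A k) (G.hA k)
      (fun x => by
        rw [G.hex]; exact h2 _ (by rw [← F.hex]; exact ⟨x, rfl⟩))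
    obtain ⟨ψ', hψ⟩ := free_lift (ψ ∘ₗ Finsupp.linearCombination (MvPolynomial (Fin n) K) (G.A k))
      (Finsupp.linearCombination (MvPolynomial (Fin n) K) (F.A k))
      (fun x => by rw [F.hex]; exact h3 _ (by rw [← G.hex]; exact ⟨x, rfl⟩))
    obtain ⟨s, hs⟩ := free_lift
      (ψ ∘ₗ Finsupp.linearCombination (MvPolynomial (Fin n) K) φ - LinearMap.id - θ)
      (Finsupp.linearCombination (MvPolynomial (Fin n) K) (F.A k))
      (fun x => by rw [F.hex]; exact h6 x)
    refine ⟨φ', ψ', s ∘ₗ Finsupp.linearCombination (MvPolynomial (Fin n) K) (F.A k),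
      hφ, ?_, ?_, ?_, ?_, ?_⟩
    · intro x hx
      rw [F.hZs, LinearMap.mem_ker] at hx
      rw [G.hZs, LinearMap.mem_ker, hφ', LinearMap.comp_apply, hx, map_zero]
    · intro x hx
      rw [G.hZs, LinearMap.mem_ker] at hx
      rw [F.hZs, LinearMap.mem_ker, hψ, LinearMap.comp_apply, hx, map_zero]
    · intro x
      exact InM_map s _ (InM_lc _ (F.hm k) x)
    · intro x hx
      rw [F.hZs, LinearMap.mem_ker] at hx
      rw [LinearMap.comp_apply, hx, map_zero]
    · intro x
      rw [F.hZs, LinearMap.mem_ker, map_sub, map_sub, hψ, LinearMap.comp_apply, hφ',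
        LinearMap.comp_apply, LinearMap.comp_apply, hs]
      simp only [LinearMap.sub_apply, LinearMap.comp_apply, LinearMap.id_apply]
      rw [h5 _ (by rw [← F.hex]; exact ⟨x, rfl⟩)]
      simp

lemma GRes.exists_deg (F G : GRes K n)
    (h : LinearMap.range (Finsupp.linearCombination (MvPolynomial (Fin n) K) F.a) =
      LinearMap.range (Finsupp.linearCombination (MvPolynomial (Fin n) K) G.a)) (k : ℕ)
    (e : F.α k) : ∃ e' : G.α k, G.deg k e' = F.deg k e := by
  classical
  obtain ⟨φ, ψ, θ, h1, h2, h3, h4, h5, h6⟩ := GRes.step F G h k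
  by_contra! hne
  have hM : InM (φ e) := by
    intro e'
    by_contra h0
    have := h1 e e' 0 h0
    simp at this
    exact hne e' this
  have h7 := InM_map ψ _ hM e
  have h8 := h6 (Finsupp.single e 1)
  rw [← F.hex] at h8
  obtain ⟨y, hy⟩ := h8
  have h9 := InM_lc _ (F.hm k) y e
  rw [hy] at h9
  have h10 := h4 (Finsupp.single e 1) e
  simp [h7, h10] at h9

lemma resBas_unique (b : ℕ → ℕ → ℕ) (hb : ∀ j, b 0 j = if j = 0 then 1 else 0) :
    ∃ c : resBas b 0, c.1 = 0 ∧ ∀ c' : resBas b 0, c' = c := by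
  have h0 : b 0 0 = 1 := by simp [hb]
  refine ⟨⟨0, ⟨0, by omega⟩⟩, rfl, ?_⟩
  rintro ⟨j, t⟩
  have hj : j = 0 := by
    by_contra hj
    have := t.2
    simp [hb, hj] at this
  subst hj
  congr
  have := t.2
  ext
  simp only
  omega

lemma isHom_GrS {p : MvPolynomial (Fin n) K} {d : ℕ} (h : p.IsHomogeneous d) (m : Fin n →₀ ℕ)
    (hm : coeff m p ≠ 0) : m.degree = d := by
  have := h hm
  rw [Finsupp.degree_eq_weight_one]; exact this

lemma quot_smul_one (L : Ideal (MvPolynomial (Fin n) K)) (r : MvPolynomial (Fin n) K) :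
    r • (1 : MvPolynomial (Fin n) K ⧸ L) = Ideal.Quotient.mk L r := by
  have : r • (1 : MvPolynomial (Fin n) K ⧸ L) = Ideal.Quotient.mk L (r * 1) := rfl
  rw [this, mul_one]

lemma toGRes (L : Ideal (MvPolynomial (Fin n) K)) (F : MinFreeRes K n L) (g : Fin n →₀ ℕ) :
    ∃ G : GRes K n, (∃ hα : G.α = fun k => resBas F.b (k + 1),
        ∀ k e, G.deg k (cast (congrFun hα k).symm e) = e.1 + g.degree) ∧
      ∀ y, y ∈ LinearMap.range (Finsupp.linearCombination (MvPolynomial (Fin n) K) G.a) ↔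
        y () ∈ Ideal.span {(monomial g (1 : K) : MvPolynomial (Fin n) K)} * L := by
  obtain ⟨c, hc, hu⟩ := resBas_unique F.b F.hb0
  have hmon : (monomial g (1 : K) : MvPolynomial (Fin n) K) ≠ 0 := by simp
  have key : ∀ x, Finsupp.linearCombination (MvPolynomial (Fin n) K)
      (fun e => Finsupp.single () (monomial g (1 : K) * F.D 0 e c)) x =
      Finsupp.single () (monomial g (1 : K) * (resMap (F.D 0) x c)) := by
    intro x
    refine Finsupp.ext fun u => ?_
    simp only [resMap, Finsupp.linearCombination_apply, Finsupp.sum, Finsupp.finsetSum_apply,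
      Finsupp.smul_apply, smul_eq_mul, Finsupp.single_apply, if_true, Finset.mul_sum]
    exact Finset.sum_congr rfl fun i _ => by ring
  have hG : ∀ k e, GrS (fun e' : resBas F.b k => e'.1) {e.1} (F.D k e) := by
    intro k e e' m hm
    rcases F.hhom k e e' with h | ⟨h, h'⟩
    · simp [h] at hm
    · have := isHom_GrS h' m hm
      simp only [Set.mem_singleton_iff]
      omega
  let G : GRes K n :=
    { α := fun k => resBas F.b (k + 1)
      deg := fun k e => e.1 + g.degree
      A := fun k => F.D (k + 1)
      a := fun e => Finsupp.single () (monomial g (1 : K) * F.D 0 e c)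
      Z := fun k => LinearMap.ker (resMap (F.D k))
      ha := by
        intro e u m hm
        simp only [Finsupp.single_apply, if_true, coeff_monomial_mul', one_mul] at hm
        split_ifs at hm with hle
        · have := hG 0 e c _ hm
          simp only [Set.mem_singleton_iff] at this ⊢
          have h2 : m.degree = (m - g).degree + g.degree := by
            rw [← map_add, tsub_add_cancel_of_le hle]
          omega
        · simp at hm
      hA := by
        intro k e e' m hm
        have := hG (k+1) e e' m hm
        simp only [Set.mem_singleton_iff] at this ⊢
        omega
      hm := by
        intro k e e'
        by_contra h0
        have h1 := hG (k+1) e e' 0 h0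
        rcases F.hhom (k+1) e e' with h | ⟨h, h'⟩
        · simp [h] at h0
        · simp at h1
          omega
      hZ0 := by
        ext x
        rw [LinearMap.mem_ker, LinearMap.mem_ker, key, Finsupp.single_eq_zero, mul_eq_zero,
          or_iff_right hmon]
        constructor
        · intro h; rw [h]; rfl
        · intro h
          ext1 c'
          rw [hu c', h]; rfl
      hZs := fun k => rfl
      hex := fun k => F.hexact k }
  refine ⟨G, ⟨rfl, fun k e => rfl⟩, fun y => ?_⟩
  have hmem : ∀ r, r ∈ L ↔ ∃ x, resMap (F.D 0) x c = r := by
    intro r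
    have h1 : r ∈ L ↔ Finsupp.single c r ∈ LinearMap.range (resMap (F.D 0)) := by
      rw [F.hexact0, LinearMap.mem_ker, Finsupp.linearCombination_single, ← Ideal.Quotient.eq_zero_iff_mem]
      rw [quot_smul_one]
    rw [h1]
    constructor
    · rintro ⟨x, hx⟩
      exact ⟨x, by rw [hx]; simp⟩
    · rintro ⟨x, hx⟩
      refine ⟨x, ?_⟩
      ext1 c'
      rw [hu c', hx]; simp
  rw [Ideal.mem_span_singleton_mul]
  constructor
  · rintro ⟨x, rfl⟩
    refine ⟨_, (hmem _).2 ⟨x, rfl⟩, ?_⟩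
    have := key x
    show _ = (Finsupp.linearCombination (MvPolynomial (Fin n) K)
      (fun e => Finsupp.single () (monomial g (1 : K) * F.D 0 e c)) x) ()
    rw [this]; simp
  · rintro ⟨z, hz, hzy⟩
    obtain ⟨x, hx⟩ := (hmem z).1 hz
    refine ⟨x, ?_⟩
    refine (key x).trans ?_
    refine Finsupp.ext fun u => ?_
    rw [hx, hzy]; simp

lemma betti_iff (b : ℕ → ℕ → ℕ) (k j : ℕ) : b k j ≠ 0 ↔ ∃ e : resBas b k, e.1 = j := by
  constructor
  · intro h
    exact ⟨⟨j, ⟨0, Nat.pos_of_ne_zero h⟩⟩, rfl⟩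
  · rintro ⟨⟨j', t⟩, rfl⟩ h
    have := t.2
    simp only at h
    omega

lemma betti_compare (I L : Ideal (MvPolynomial (Fin n) K)) (F : MinFreeRes K n I)
    (G : MinFreeRes K n L) (g g' : Fin n →₀ ℕ)
    (h : Ideal.span {(monomial g (1 : K) : MvPolynomial (Fin n) K)} * I =
      Ideal.span {(monomial g' (1 : K) : MvPolynomial (Fin n) K)} * L) (k j : ℕ)
    (hb : F.b (k + 1) j ≠ 0) : ∃ j', G.b (k + 1) j' ≠ 0 ∧ j' + g'.degree = j + g.degree := by
  obtain ⟨F', ⟨hα, hd⟩, hr⟩ := toGRes I F g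
  obtain ⟨G', ⟨hα', hd'⟩, hr'⟩ := toGRes L G g'
  obtain ⟨e, rfl⟩ := (betti_iff _ _ _).1 hb
  obtain ⟨e', he'⟩ := GRes.exists_deg F' G' (by ext y; rw [hr, hr', h]) k
    (cast (congrFun hα k).symm e)
  rw [hd] at he'
  have h3 := hd' k (cast (congrFun hα' k) e')
  rw [cast_cast, cast_eq, he'] at h3
  exact ⟨_, (betti_iff _ _ _).2 ⟨_, rfl⟩, h3.symm⟩

lemma betti_one (L : Ideal (MvPolynomial (Fin n) K)) (hL : L ≠ ⊥) (G : MinFreeRes K n L) :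
    ∃ j, 1 ≤ j ∧ G.b 1 j ≠ 0 := by
  by_contra! hne
  apply hL
  obtain ⟨c, hc, hu⟩ := resBas_unique G.b G.hb0
  have hD : ∀ e c, G.D 0 e c = 0 := by
    intro e c'
    rcases G.hhom 0 e c' with h | ⟨h, -⟩
    · exact h
    · exact absurd ((betti_iff _ _ _).2 ⟨e, rfl⟩) (by simpa using hne e.1 (by omega))
  have hD' : G.D 0 = 0 := by ext1 e; ext1 c; exact hD e c
  rw [eq_bot_iff]
  intro r hr
  have h1 : Finsupp.single c r ∈ LinearMap.range (resMap (G.D 0)) := by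
    rw [G.hexact0, LinearMap.mem_ker, Finsupp.linearCombination_single, quot_smul_one]
    exact Ideal.Quotient.eq_zero_iff_mem.2 hr
  obtain ⟨x, hx⟩ := h1
  have h2 := DFunLike.congr_fun hx c
  simpa [resMap, hD', Finsupp.linearCombination_apply, eq_comm] using h2

lemma reg_isGreatest (I : Ideal (MvPolynomial (Fin n) K)) (F : MinFreeRes K n I) :
    IsGreatest { d : ℤ | ∃ k j : ℕ, F.b k j ≠ 0 ∧ d = (j : ℤ) - (k : ℤ) } F.reg := by
  have hfin : { d : ℤ | ∃ k j : ℕ, F.b k j ≠ 0 ∧ d = (j : ℤ) - (k : ℤ) }.Finite := by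
    refine (F.hfin.image fun kj : ℕ × ℕ => (kj.2 : ℤ) - kj.1).subset ?_
    rintro d ⟨k, j, h, rfl⟩
    exact ⟨(k, j), h, rfl⟩
  have hne : { d : ℤ | ∃ k j : ℕ, F.b k j ≠ 0 ∧ d = (j : ℤ) - (k : ℤ) }.Nonempty :=
    ⟨0, 0, 0, by simp [F.hb0], by simp⟩
  exact ⟨Int.csSup_mem hne hfin.bddAbove, fun d hd => le_csSup hfin.bddAbove hd⟩

lemma reg_shift (I L : Ideal (MvPolynomial (Fin n) K)) (g : Fin n →₀ ℕ) (hL : L ≠ ⊥)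
    (h : I = Ideal.span {(monomial g (1 : K) : MvPolynomial (Fin n) K)} * L)
    (F : MinFreeRes K n I) (G : MinFreeRes K n L) : F.reg = G.reg + (g.degree : ℤ) := by
  have h' : Ideal.span {(monomial 0 (1 : K) : MvPolynomial (Fin n) K)} * I =
      Ideal.span {(monomial g (1 : K) : MvPolynomial (Fin n) K)} * L := by
    rw [← h]
    have : (monomial 0 (1 : K) : MvPolynomial (Fin n) K) = 1 := rfl
    rw [this, Ideal.span_singleton_one, Ideal.top_mul]
  have hG := reg_isGreatest L G
  obtain ⟨j1, hj1, hb1⟩ := betti_one L hL G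
  have hj1' := hG.2 ⟨1, j1, hb1, rfl⟩
  refine (reg_isGreatest I F).unique ⟨?_, ?_⟩
  · obtain ⟨k, j, hb, hr⟩ : ∃ k j : ℕ, G.b (k+1) j ≠ 0 ∧ G.reg = (j : ℤ) - ((k + 1 : ℕ) : ℤ) := by
      obtain ⟨k, j, hb, hr⟩ := hG.1
      rcases k with _ | k
      · rw [G.hb0] at hb
        have : j = 0 := by by_contra h; simp [h] at hb
        subst this
        exact ⟨0, j1, hb1, by push_cast at *; omega⟩
      · exact ⟨k, j, hb, hr⟩
    obtain ⟨j', hj', he⟩ := betti_compare L I G F g 0 h'.symm k j hb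
    refine ⟨k + 1, j', hj', ?_⟩
    simp only [map_zero] at he
    omega
  · rintro d ⟨k, j, hb, rfl⟩
    rcases k with _ | k
    · rw [F.hb0] at hb
      have : j = 0 := by by_contra h; simp [h] at hb
      subst this
      push_cast at *
      omega
    · obtain ⟨j', hj', he⟩ := betti_compare I L F G 0 g h' k j hb
      have := hG.2 ⟨k + 1, j', hj', rfl⟩
      simp only [map_zero] at he
      omega

lemma two_le_height (q : ℕ) (u : Fin q → Fin n →₀ ℕ) (hq : 0 < q)
    (hu : ∀ i, ∃ j, u j i = 0) : (2 : ℕ∞) ≤ heightOf (monIdeal K u) := by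
  unfold heightOf
  refine le_iInf₂ fun p hp => ?_
  have hp' : ∀ j, monomial (u j) (1 : K) ∈ p.asIdeal := fun j =>
    hp (Ideal.subset_span ⟨j, rfl⟩)
  have h1 : ∃ i, (X i : MvPolynomial (Fin n) K) ∈ p.asIdeal := by
    have := hp' ⟨0, hq⟩
    rw [monomial_eq, map_one, one_mul, Finsupp.prod, p.2.prod_mem_iff] at this
    obtain ⟨i, -, hi⟩ := this
    exact ⟨i, p.2.mem_of_pow_mem _ hi⟩
  obtain ⟨i, hi⟩ := h1
  obtain ⟨j, hj⟩ := hu i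
  have hX : (Ideal.span {(X i : MvPolynomial (Fin n) K)}).IsPrime :=
    (Ideal.span_singleton_prime (X_ne_zero i)).2 X_prime
  let P0 : PrimeSpectrum (MvPolynomial (Fin n) K) := ⟨⊥, Ideal.isPrime_bot⟩
  let P1 : PrimeSpectrum (MvPolynomial (Fin n) K) := ⟨_, hX⟩
  have h01 : P0 < P1 := by
    rw [← PrimeSpectrum.asIdeal_lt_asIdeal]
    show ⊥ < Ideal.span _
    rw [bot_lt_iff_ne_bot, Ne, Ideal.span_singleton_eq_bot]
    exact X_ne_zero i
  have h1p : P1 < p := by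
    rw [← PrimeSpectrum.asIdeal_lt_asIdeal]
    refine lt_of_le_of_ne ((Ideal.span_singleton_le_iff_mem _).2 hi) fun heq => ?_
    have h2 := hp' j
    rw [← heq] at h2
    have h3 : (X i : MvPolynomial (Fin n) K) ∣ monomial (u j) 1 := Ideal.mem_span_singleton.1 h2
    rw [X_dvd_monomial] at h3
    simp [hj] at h3
  have a1 := Order.height_add_one_le h01
  have a2 := Order.height_add_one_le h1p
  calc (2 : ℕ∞) = 0 + 1 + 1 := by norm_num
    _ ≤ Order.height P0 + 1 + 1 := by gcongr; exact zero_le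
    _ ≤ Order.height P1 + 1 := by gcongr
    _ ≤ _ := a2

end Aux

/-- **Signature invariants of monomial ideals** (Proposition: reduction of height-one
ideals, regularity).  Let `I` be a monomial ideal of `R = K[x_1,…,x_n]` of height `1`
that is not principal, with minimal monomial generating set `G(I) = {x^{v_1},…,x^{v_q}}`,
and let `f = x^g` be the greatest common divisor of the monomials in `G(I)` (so
`g i = min_j (v j) i`).  Then there is a monomial ideal `L` of height at least `2` such
that `I = f·L`, `reg(R/I) = reg(R/L) + deg(f)` and `sgn(I) = sgn(L)`, where the
regularity is computed from (any) minimal graded free resolution. -/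
theorem height_one_factor_reg (K : Type) [Field K] (n q : ℕ)
    (v : Fin q → Fin n →₀ ℕ) (hv : AntichainFam v)
    (I : Ideal (MvPolynomial (Fin n) K)) (hI : I = monIdeal K v)
    (hnp : ¬ Submodule.IsPrincipal I) (hht : heightOf I = 1)
    (g : Fin n →₀ ℕ)
    (hg : g = Finsupp.equivFunOnFinite.symm fun i => sInf (Set.range fun j => v j i)) :
    ∃ (q' : ℕ) (u : Fin q' → Fin n →₀ ℕ), AntichainFam u ∧
      (2 : ℕ∞) ≤ heightOf (monIdeal K u) ∧
      I = Ideal.span {(monomial g (1 : K) : MvPolynomial (Fin n) K)} * monIdeal K u ∧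
      (∀ (F : MinFreeRes K n I) (G : MinFreeRes K n (monIdeal K u)),
        F.reg = G.reg + (∑ i, g i : ℕ)) ∧
      monIdeal K (sgnExp u) = monIdeal K (sgnExp v) := by
  have hq : 0 < q := by
    rcases Nat.eq_zero_or_pos q with h | h
    · exfalso
      subst h
      apply hnp
      rw [hI, monIdeal, Set.range_eq_empty, Ideal.span_empty]
      infer_instance
    · exact h
  have : Nonempty (Fin q) := ⟨⟨0, hq⟩⟩
  have hgi : ∀ i, g i = sInf (Set.range fun j => v j i) := fun i => by rw [hg]; rfl
  have hle : ∀ j, g ≤ v j := by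
    intro j i
    rw [hgi]
    exact Nat.sInf_le ⟨j, rfl⟩
  have hadd : ∀ j, g + (v j - g) = v j := fun j => add_tsub_cancel_of_le (hle j)
  have hmin : ∀ i, ∃ j, v j i = g i := by
    intro i
    rw [hgi]
    exact Nat.sInf_mem (Set.range_nonempty fun j => v j i)
  have hfac : I = Ideal.span {(monomial g (1 : K) : MvPolynomial (Fin n) K)} *
      monIdeal K (fun j => v j - g) := by
    rw [hI, monIdeal, monIdeal, Ideal.span_mul_span', Set.singleton_mul, ← Set.range_comp]
    congr 2
    ext1 j
    simp [monomial_mul, hadd]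
  have hne : monIdeal K (fun j => v j - g) ≠ ⊥ := by
    intro h
    have h1 : monomial (v ⟨0, hq⟩ - g) (1 : K) ∈ monIdeal K (fun j => v j - g) :=
      Ideal.subset_span ⟨⟨0, hq⟩, rfl⟩
    rw [h] at h1
    simp at h1
  refine ⟨q, fun j => v j - g, ?_, ?_, hfac, ?_, ?_⟩
  · intro j k hjk
    apply hv
    rw [← hadd j, ← hadd k]
    exact add_le_add_right hjk g
  · refine two_le_height q _ hq fun i => ?_
    obtain ⟨j, hj⟩ := hmin i
    exact ⟨j, by simp [hj]⟩
  · intro F G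
    rw [reg_shift I _ g hne hfac F G, Finsupp.degree_eq_sum]
  · congr 1
    funext j
    ext i
    simp only [sgnExp, Finsupp.equivFunOnFinite_symm_apply_apply]
    refine Finset.card_bij (fun m _ => g i + m) ?_ ?_ ?_
    · intro m hm
      simp only [Finset.mem_filter, Finset.mem_image, Finset.mem_univ, true_and] at hm ⊢
      obtain ⟨⟨k, rfl⟩, h2⟩ := hm
      have a := hle k i
      have b := hle j i
      simp only [Finsupp.tsub_apply] at h2 ⊢
      exact ⟨⟨k, by omega⟩, by omega⟩
    · intro a _ b _ h
      omega
    · intro m hm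
      simp only [Finset.mem_filter, Finset.mem_image, Finset.mem_univ, true_and] at hm
      obtain ⟨⟨k, rfl⟩, h2⟩ := hm
      have a := hle k i
      have b := hle j i
      refine ⟨v k i - g i, ?_, by omega⟩
      refine Finset.mem_filter.2 ⟨Finset.mem_image.2 ⟨k, Finset.mem_univ _, rfl⟩, ?_⟩
      simp only [Finsupp.tsub_apply]
      omega
end
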